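/- Let n ≥ 1 and let A, B ∈ Mod be nonisomorphic structures. If there exists a set C ∈ Σ⁰_{2n}(Mod) such that every S ∈ Mod with S ≅ A belongs to C and no S ∈ Mod with S ≅ B belongs to C, then the family {A, B} is =_{ℕ^ℕ}^{n+}-learnable. -/

import Mathlib

/-!  Common definitions.

`Tower n` is the space ℕ^(ℕ^(n+1)) of the paper: `Tower 0 = ℕ → ℕ`,
`Tower (n+1) = ℕ → Tower n`, each with the product topology (ℕ discrete).
-/

def Tower : ℕ → Type
  | 0 => ℕ → ℕ
  | n + 1 => ℕ → Tower n

instance Tower.topologicalSpace : (n : ℕ) → TopologicalSpace (Tower n)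
  | 0 => inferInstanceAs (TopologicalSpace (ℕ → ℕ))
  | n + 1 => letI := Tower.topologicalSpace n
             inferInstanceAs (TopologicalSpace (ℕ → Tower n))

/-- The Friedman–Stanley jump `E⁺` of an equivalence relation `E` on `X`. -/
def FSJump {X : Type*} (E : X → X → Prop) (p q : ℕ → X) : Prop :=
  (∀ k, ∃ l, E (p k) (q l)) ∧ ∀ l, ∃ k, E (q l) (p k)

/-- The power `E^ω` of an equivalence relation `E` on `X`. -/
def RelPow {X : Type*} (E : X → X → Prop) (p q : ℕ → X) : Prop :=
  ∀ k, E (p k) (q k)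

/-- `eqNatPlus n` is the relation `=_ℕ^{(n+1)+}` on `Tower n = ℕ^(ℕ^(n+1))`. -/
def eqNatPlus : (n : ℕ) → Tower n → Tower n → Prop
  | 0 => FSJump (· = · : ℕ → ℕ → Prop)
  | n + 1 => FSJump (eqNatPlus n)

/-- `eqBairePlus n` is the relation `=_{ℕ^ℕ}^{(n+1)+}` on `Tower (n+1) = ℕ^(ℕ^(n+2))`. -/
def eqBairePlus : (n : ℕ) → Tower (n + 1) → Tower (n + 1) → Prop
  | 0 => FSJump (· = · : (ℕ → ℕ) → (ℕ → ℕ) → Prop)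
  | n + 1 => FSJump (eqBairePlus n)

/-- `FullRel m` on `Tower m = ℕ^(ℕ^(m+1))`: for `m = 2n` it is `(=_ℕ^+)^{n(ω+)}`,
for `m = 2n+1` it is `(=_{ℕ^ℕ}^+)^{n(ω+)}` (with `E^{0(ω+)} = E`,
`E^{(n+1)(ω+)} = ((E^{n(ω+)})^ω)^+`). -/
def FullRel : (m : ℕ) → Tower m → Tower m → Prop
  | 0 => FSJump (· = · : ℕ → ℕ → Prop)
  | 1 => FSJump (· = · : (ℕ → ℕ) → (ℕ → ℕ) → Prop)
  | m + 2 => FSJump (RelPow (FullRel m))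

/-- The pair of canonical elements `(F_{m+1}, I_{m+1})` of `Tower m = ℕ^(ℕ^(m+1))`. -/
def can : (m : ℕ) → Tower m × Tower m
  | 0 => (fun k => if k = 0 then 0 else 1, fun _ => 1)
  | 1 => (fun i k => if i = 0 then 0 else if k + 1 < i then 0 else 1,
          fun i k => if k < i then 0 else 1)
  | m + 2 =>
      (fun i k => if i = 0 then (can m).1 else if k + 1 < i then (can m).1 else (can m).2,
       fun i k => if k < i then (can m).1 else (can m).2)

/-- The canonical element `F_{m+1} ∈ ℕ^(ℕ^(m+1))`. -/
def canF (m : ℕ) : Tower m := (can m).1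

/-- The canonical element `I_{m+1} ∈ ℕ^(ℕ^(m+1))`. -/
def canI (m : ℕ) : Tower m := (can m).2

/-- `p ∈ Tower m = ℕ^(ℕ^(m+1))` is `full_{m+1}`. -/
def IsFull (m : ℕ) (p : Tower m) : Prop := FullRel m p (canF m)

/-- `p ∈ Tower m = ℕ^(ℕ^(m+1))` is `initial_{m+1}`. -/
def IsInitial (m : ℕ) (p : Tower m) : Prop := FullRel m p (canI m)

open Classical in
/-- The permission operator `∧₀`. -/
noncomputable def perm0 (p q : ℕ → ℕ) : ℕ → ℕ :=
  fun k => if ∀ j ≤ k, p j = q j then p k else 1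

/-- The permission operator `∧_{m+1}` on `Tower m = ℕ^(ℕ^(m+1))`
(with `⟨·,·⟩ = Nat.pair`). -/
noncomputable def perm : (m : ℕ) → Tower m → Tower m → Tower m
  | 0, p, q => fun x => max (p (Nat.unpair x).1) (q (Nat.unpair x).2)
  | 1, p, q => fun x => perm0 (p (Nat.unpair x).1) (q (Nat.unpair x).2)
  | m + 2, p, q => fun x k => perm m (p (Nat.unpair x).1 k) (q (Nat.unpair x).2 k)

/-- The operator `⊗_{m+1,i}` on `Tower m = ℕ^(ℕ^(m+1))` (with `⟨·,·⟩ = Nat.pair`). -/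
def otimes : (m : ℕ) → ℕ → Tower m → Tower m
  | 0, i, p => fun k => Nat.pair (p k) i
  | m + 1, i, p => fun k => otimes m i (p k)

/-- `E` continuously reduces to `F`. -/
def ContReduces {X Y : Type*} [TopologicalSpace X] [TopologicalSpace Y]
    (E : X → X → Prop) (F : Y → Y → Prop) : Prop :=
  ∃ f : X → Y, Continuous f ∧ ∀ x x', E x x' ↔ F (f x) (f x')

/-- `SigmaLevel X n` is the pointclass `Σ⁰_{n+1}(X)`: `Σ⁰_1` = open sets,
`Σ⁰_{n+1}` = countable unions of complements of `Σ⁰_n` sets. -/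
def SigmaLevel (X : Type*) [TopologicalSpace X] : ℕ → Set (Set X)
  | 0 => {C | IsOpen C}
  | n + 1 => {C | ∃ A : ℕ → Set X, (∀ i, A i ∈ SigmaLevel X n) ∧ C = ⋃ i, (A i)ᶜ}

/-- The space of `(ι, ar)`-structures with domain ℕ. -/
def Md (ι : Type) (ar : ι → ℕ) : Type := ∀ i : ι, (Fin (ar i) → ℕ) → Bool

instance (ι : Type) (ar : ι → ℕ) : TopologicalSpace (Md ι ar) :=
  inferInstanceAs (TopologicalSpace (∀ i : ι, (Fin (ar i) → ℕ) → Bool))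

/-- Isomorphism of structures with domain ℕ. -/
def Iso {ι : Type} {ar : ι → ℕ} (A B : Md ι ar) : Prop :=
  ∃ σ : ℕ → ℕ, Function.Bijective σ ∧ ∀ i v, A i v = B i (σ ∘ v)

/-- The learning domain of a family: the closure of `K` under isomorphism. -/
def LearnDom {ι : Type} {ar : ι → ℕ} (K : Set (Md ι ar)) : Set (Md ι ar) :=
  {S | ∃ A ∈ K, Iso S A}

/-- The family `K` is `E`-learnable. -/
def Learnable {ι : Type} {ar : ι → ℕ} {X : Type*} [TopologicalSpace X]
    (E : X → X → Prop) (K : Set (Md ι ar)) : Prop :=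
  ∃ Γ : LearnDom K → X, Continuous Γ ∧
    ∀ S S' : LearnDom K, (Iso S.1 S'.1 ↔ E (Γ S) (Γ S'))

/-- A countable family of pairwise nonisomorphic structures. -/
def GoodFamily {ι : Type} {ar : ι → ℕ} (K : Set (Md ι ar)) : Prop :=
  K.Countable ∧ ∀ A ∈ K, ∀ B ∈ K, A ≠ B → ¬ Iso A B

/-- `E` is learn-reducible to `F` (w.r.t. structures in `Md ι ar`). -/
def LearnRed (ι : Type) (ar : ι → ℕ) {X Y : Type*} [TopologicalSpace X]
    [TopologicalSpace Y] (E : X → X → Prop) (F : Y → Y → Prop) : Prop :=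
  ∀ K : Set (Md ι ar), GoodFamily K → Learnable E K → Learnable F K

/-- `E` is compact for learning (w.r.t. structures in `Md ι ar`). -/
def CompactForLearning (ι : Type) (ar : ι → ℕ) {X : Type*} [TopologicalSpace X]
    (E : X → X → Prop) : Prop :=
  ∀ K : Set (Md ι ar), GoodFamily K →
    (Learnable E K ↔ ∀ A ∈ K, ∀ B ∈ K, A ≠ B → Learnable E ({A, B} : Set (Md ι ar)))

/-!
Membership in a `Σ⁰₂` set `⋃ i, ⋂ j, D i j` is read off from the set of rows `j ↦ [x ∈ D i j]`. If
each `D i` is decreasing, a row is constant or switches once from in to out. Adding all the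
switching rows to the rows of `x` leaves only two possible sets of rows, according to whether the
constant row occurs. Passing from `E` to `(E^ω)⁺` therefore gains two levels of the Borel hierarchy,
and from clopen sets one gets that `Σ⁰_{2n}` membership reduces to the canonical pair.

Two further levels would thus cost an infinite power as well as a jump, but the power is absorbed:
a sequence of `E⁺`-classes is coded by one `E⁺`-class by tagging the elements of its `i`-th term
with `i`.
-/

open Set TopologicalSpace

section Relations

variable {X Y Z : Type*} {E : X → X → Prop}

theorem FSJump.equivalence (hE : Equivalence E) : Equivalence (FSJump E) where
  refl _ := ⟨fun k => ⟨k, hE.refl _⟩, fun k => ⟨k, hE.refl _⟩⟩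
  symm h := h.symm
  trans {p q r} hpq hqr := by
    have forth {p q r : ℕ → X} (hpq : ∀ k, ∃ l, E (p k) (q l)) (hqr : ∀ k, ∃ l, E (q k) (r l))
        (k : ℕ) : ∃ l, E (p k) (r l) := by
      obtain ⟨l, hl⟩ := hpq k
      exact (hqr l).imp fun _ => hE.trans hl
    exact ⟨forth hpq.1 hqr.1, forth hqr.2 hpq.2⟩

theorem RelPow.equivalence (hE : Equivalence E) : Equivalence (RelPow E) where
  refl _ _ := hE.refl _
  symm h k := hE.symm (h k)
  trans h h' k := hE.trans (h k) (h' k)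

theorem relPow_eq : RelPow (@Eq X) = @Eq (ℕ → X) := by
  ext p q
  exact funext_iff.symm

theorem rel_iff_of_two_classes (hE : Equivalence E) {a b x y : X} (hab : ¬ E a b) {P Q : Prop}
    (hx : (P → E x a) ∧ (¬ P → E x b)) (hy : (Q → E y a) ∧ (¬ Q → E y b)) :
    E x y ↔ (P ↔ Q) := by
  have rel_left_iff {z : X} {R : Prop} (hz : (R → E z a) ∧ (¬ R → E z b)) : E z a ↔ R :=
    ⟨fun hza => by_contra fun hR => hab (hE.trans (hE.symm hza) (hz.2 hR)), hz.1⟩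
  constructor
  · intro hxy
    rw [← rel_left_iff hx, ← rel_left_iff hy]
    exact ⟨hE.trans (hE.symm hxy), hE.trans hxy⟩
  · intro hPQ
    by_cases hP : P
    · exact hE.trans (hx.1 hP) (hE.symm (hy.1 (hPQ.1 hP)))
    · exact hE.trans (hx.2 hP) (hE.symm (hy.2 (mt hPQ.2 hP)))

variable [TopologicalSpace X] [TopologicalSpace Y] [TopologicalSpace Z]
  {F : Y → Y → Prop} {G : Z → Z → Prop}

namespace ContReduces

theorem trans (hEF : ContReduces E F) (hFG : ContReduces F G) : ContReduces E G := by
  obtain ⟨f, hf, hEF⟩ := hEF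
  obtain ⟨g, hg, hFG⟩ := hFG
  exact ⟨g ∘ f, hg.comp hf, fun x y => (hEF x y).trans (hFG _ _)⟩

theorem relPow (h : ContReduces E F) : ContReduces (RelPow E) (RelPow F) := by
  obtain ⟨f, hf, h⟩ := h
  refine ⟨fun p k => f (p k), by fun_prop, fun p q => ?_⟩
  simp only [RelPow, h]

theorem fsJump (h : ContReduces E F) : ContReduces (FSJump E) (FSJump F) := by
  obtain ⟨f, hf, h⟩ := h
  refine ⟨fun p k => f (p k), by fun_prop, fun p q => ?_⟩
  simp only [FSJump, h]

end ContReduces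

/-- `E` absorbs tags: a point of `X` together with a natural number can be coded continuously by a
single point of `X`, i.e. the product of equality on `ℕ` with `E` reduces to `E`. -/
def AbsorbsTags (E : X → X → Prop) : Prop :=
  ContReduces (fun p q : ℕ × X => p.1 = q.1 ∧ E p.2 q.2) E

theorem absorbsTags_eq_baire : AbsorbsTags (@Eq (ℕ → ℕ)) := by
  refine ⟨fun p k => k.casesOn p.1 p.2, continuous_pi ?_, fun p q => ?_⟩
  · rintro (_ | k) <;> dsimp only <;> fun_prop
  · simp only [funext_iff]
    exact Nat.and_forall_add_one (p := fun k => (k.casesOn p.1 p.2 : ℕ) = k.casesOn q.1 q.2)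

namespace AbsorbsTags

theorem fsJump (h : AbsorbsTags E) : AbsorbsTags (FSJump E) := by
  obtain ⟨f, hf, h⟩ := h
  refine ⟨fun p k => f (p.1, p.2 k), by fun_prop, fun ⟨i, p⟩ ⟨j, q⟩ => ?_⟩
  simp only [FSJump, ← h]
  by_cases hij : i = j
  · simp only [hij, true_and]
  · simp only [hij, Ne.symm hij, false_and, exists_false, forall_const]

theorem relPow_fsJump (h : AbsorbsTags E) : ContReduces (RelPow (FSJump E)) (FSJump E) := by
  obtain ⟨f, hf, h⟩ := h
  let code (p : ℕ → ℕ → X) (k : ℕ) : X := f (k.unpair.1, p k.unpair.1 k.unpair.2)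
  have code_half (p q : ℕ → ℕ → X) :
      (∀ k, ∃ l, E (code p k) (code q l)) ↔ ∀ i k, ∃ l, E (p i k) (q i l) := by
    simp only [code, ← h]
    constructor
    · intro hpq i k
      obtain ⟨l, hil, hl⟩ := hpq (Nat.pair i k)
      simp only [Nat.unpair_pair] at hil hl
      exact ⟨l.unpair.2, hil ▸ hl⟩
    · intro hpq k
      obtain ⟨l, hl⟩ := hpq k.unpair.1 k.unpair.2
      exact ⟨Nat.pair k.unpair.1 l, by simpa only [Nat.unpair_pair, true_and] using hl⟩
  refine ⟨code, by fun_prop, fun p q => ?_⟩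
  simp only [RelPow, FSJump, code_half, forall_and]

end AbsorbsTags

end Relations

section BorelHierarchy

variable {X : Type*}

theorem dissipate_mem_of_infClosed {𝒟 : Set (Set X)} (h𝒟 : InfClosed 𝒟) {D : ℕ → Set X}
    (hD : ∀ j, D j ∈ 𝒟) (j : ℕ) : dissipate D j ∈ 𝒟 := by
  induction j with
  | zero => exact dissipate_zero_nat D ▸ hD 0
  | succ j ih => exact dissipate_succ D j ▸ h𝒟 ih (hD (j + 1))

theorem exists_forall_mem_iff_lt {D : ℕ → Set X} (hD : Antitone D) {x : X} (hx : x ∉ ⋂ j, D j) :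
    ∃ k, ∀ j, x ∈ D j ↔ j < k := by
  classical
  have hx : ∃ j, x ∉ D j := by simpa only [mem_iInter, not_forall] using hx
  refine ⟨Nat.find hx, fun j => ?_⟩
  rw [Nat.lt_find_iff]
  exact ⟨fun hj i hij => not_not.2 (hD hij hj), fun h => not_not.1 (h j le_rfl)⟩

variable [TopologicalSpace X] {n : ℕ}

theorem iUnion_compl_mem_sigmaLevel_succ {κ : Type*} [Countable κ] [Nonempty κ] {A : κ → Set X}
    (hA : ∀ k, A k ∈ SigmaLevel X n) : ⋃ k, (A k)ᶜ ∈ SigmaLevel X (n + 1) := by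
  obtain ⟨e, he⟩ := exists_surjective_nat κ
  exact ⟨A ∘ e, fun i => hA (e i), (he.iUnion_comp fun k => (A k)ᶜ).symm⟩

theorem supClosed_sigmaLevel : ∀ n, SupClosed (SigmaLevel X n)
  | 0 => fun _ hU _ hV => IsOpen.union hU hV
  | n + 1 => by
    rintro _ ⟨A, hA, rfl⟩ _ ⟨B, hB, rfl⟩
    have h : (⋃ i, (A i)ᶜ) ⊔ ⋃ i, (B i)ᶜ = ⋃ s, (Sum.elim A B s)ᶜ := by
      simp only [iUnion_sum, Sum.elim_inl, Sum.elim_inr, sup_eq_union]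
    exact h ▸ iUnion_compl_mem_sigmaLevel_succ (Sum.forall.2 ⟨hA, hB⟩)

theorem infClosed_sigmaLevel : ∀ n, InfClosed (SigmaLevel X n)
  | 0 => fun _ hU _ hV => IsOpen.inter hU hV
  | n + 1 => by
    rintro _ ⟨A, hA, rfl⟩ _ ⟨B, hB, rfl⟩
    have h : (⋃ i, (A i)ᶜ) ⊓ ⋃ j, (B j)ᶜ = ⋃ s : ℕ × ℕ, (A s.1 ∪ B s.2)ᶜ := by
      simp only [inf_eq_inter, iUnion_inter_iUnion, iUnion_prod', compl_union]
    exact h ▸ iUnion_compl_mem_sigmaLevel_succ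
      fun s => supClosed_sigmaLevel n (hA s.1) (hB s.2)

theorem exists_iUnion_iInter_of_mem_sigmaLevel_add_two {C : Set X}
    (hC : C ∈ SigmaLevel X (n + 2)) :
    ∃ D : ℕ → ℕ → Set X, (∀ i j, D i j ∈ SigmaLevel X n) ∧ C = ⋃ i, ⋂ j, D i j := by
  obtain ⟨A, hA, rfl⟩ := hC
  choose D hD hAD using hA
  exact ⟨D, hD, by simp only [hAD, compl_iUnion, compl_compl]⟩

theorem exists_isClopen_iUnion_eq_of_isOpen [SecondCountableTopology X]
    (hX : IsTopologicalBasis {s : Set X | IsClopen s}) {U : Set X} (hU : IsOpen U) :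
    ∃ V : ℕ → Set X, (∀ j, IsClopen (V j)) ∧ U = ⋃ j, V j := by
  obtain ⟨S, hS, rfl⟩ := hX.open_eq_sUnion hU
  obtain ⟨T, hT, hTS, hUT⟩ := isOpen_sUnion_countable S fun s hs => (hS hs).isOpen
  obtain ⟨V, hV⟩ := (hT.insert ∅).exists_eq_range (insert_nonempty ∅ T)
  refine ⟨V, forall_mem_range.1 fun s hs => ?_, ?_⟩
  · rcases hV ▸ hs with rfl | hs
    · exact isClopen_empty
    · exact hS (hTS hs)
  · rw [← hUT, ← sUnion_range, ← hV, sUnion_insert, empty_union]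

theorem exists_isClopen_iUnion_iInter_of_mem_sigmaLevel_one [SecondCountableTopology X]
    (hX : IsTopologicalBasis {s : Set X | IsClopen s}) {C : Set X} (hC : C ∈ SigmaLevel X 1) :
    ∃ D : ℕ → ℕ → Set X, (∀ i j, IsClopen (D i j)) ∧ C = ⋃ i, ⋂ j, D i j := by
  obtain ⟨A, hA, rfl⟩ := hC
  choose V hV hAV using fun i => exists_isClopen_iUnion_eq_of_isOpen hX (hA i)
  exact ⟨fun i j => (V i j)ᶜ, fun i j => (hV i j).compl, by simp only [hAV, compl_iUnion]⟩

end BorelHierarchy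

section CanonicalPair

variable {Y : Type*}

/-- The sequence `a^i b^∞`, the `i`-th term of the canonical element `canI` when `a` and `b` are the
canonical elements two levels below. -/
def switchSeq (a b : Y) (i k : ℕ) : Y := if k < i then a else b

/-- The sequence with terms `a^∞, b^∞, a b^∞, a a b^∞, …`, which is `canF` when `a` and `b` are the
canonical elements two levels below. -/
def fullSeq (a b : Y) : ℕ → ℕ → Y
  | 0 => fun _ => a
  | i + 1 => switchSeq a b i

theorem fullSeq_apply (a b : Y) (i k : ℕ) :
    fullSeq a b i k = if i = 0 then a else if k + 1 < i then a else b := by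
  cases i <;> simp [fullSeq, switchSeq]

theorem canF_one : canF 1 = fullSeq 0 1 := by
  funext i k
  exact (fullSeq_apply 0 1 i k).symm

theorem canF_add_two (m : ℕ) : canF (m + 2) = fullSeq (canF m) (canI m) := by
  funext i k
  exact (fullSeq_apply (canF m) (canI m) i k).symm

theorem canI_one : canI 1 = switchSeq 0 1 := rfl

theorem canI_add_two (m : ℕ) : canI (m + 2) = switchSeq (canF m) (canI m) := rfl

theorem fullRel_one : FullRel 1 = FSJump (RelPow (@Eq ℕ)) := by
  rw [relPow_eq]
  rfl

theorem fullRel_add_two (m : ℕ) : FullRel (m + 2) = FSJump (RelPow (FullRel m)) := rfl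

theorem FullRel.equivalence : ∀ m, Equivalence (FullRel m)
  | 0 => FSJump.equivalence eq_equivalence
  | 1 => FSJump.equivalence eq_equivalence
  | m + 2 => FSJump.equivalence (RelPow.equivalence (FullRel.equivalence m))

theorem not_fsJump_relPow_fullSeq_switchSeq {E : Y → Y → Prop} {a b : Y} (hab : ¬ E a b) :
    ¬ FSJump (RelPow E) (fullSeq a b) (switchSeq a b) := by
  rintro ⟨h, -⟩
  obtain ⟨l, hl⟩ := h 0
  exact hab (by simpa only [fullSeq, switchSeq, lt_irrefl, if_false] using hl l)

theorem not_fullRel_canF_canI : ∀ m, ¬ FullRel m (canF m) (canI m)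
  | 0 => fun h => by simpa [canF, canI, can] using h.1 0
  | 1 => by
    rw [fullRel_one, canF_one, canI_one]
    exact not_fsJump_relPow_fullSeq_switchSeq zero_ne_one
  | m + 2 => by
    rw [fullRel_add_two, canF_add_two, canI_add_two]
    exact not_fsJump_relPow_fullSeq_switchSeq (not_fullRel_canF_canI m)

end CanonicalPair

section Membership

variable {X Y : Type*} [TopologicalSpace X] [TopologicalSpace Y] {E : Y → Y → Prop} {a b : Y}

/-- Membership in `D` reduces to the pair of `E`-classes of `a` and `b`: some continuous map sends
the points of `D` to the class of `a` and all other points to the class of `b`. -/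
def MemReduces (E : Y → Y → Prop) (a b : Y) (D : Set X) : Prop :=
  ∃ Γ : X → Y, Continuous Γ ∧ ∀ x, (x ∈ D → E (Γ x) a) ∧ (x ∉ D → E (Γ x) b)

/-- The sequence whose terms are those of `p` together with those of `q`. -/
def interleave {Z : Type*} (p q : ℕ → Z) (k : ℕ) : Z :=
  Sum.elim p q (Equiv.natSumNatEquivNat.symm k)

theorem fsJump_interleave_iff {Z : Type*} {R : Z → Z → Prop} {p q r : ℕ → Z} :
    FSJump R (interleave p q) r ↔
      ((∀ k, ∃ l, R (p k) (r l)) ∧ ∀ k, ∃ l, R (q k) (r l)) ∧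
        ∀ l, (∃ k, R (r l) (p k)) ∨ ∃ k, R (r l) (q k) := by
  let e := Equiv.natSumNatEquivNat.symm
  exact and_congr
    ((e.surjective.forall (p := fun s => ∃ l, R (Sum.elim p q s) (r l))).symm.trans Sum.forall)
    (forall_congr' fun l =>
      (e.surjective.exists (p := fun s => R (r l) (Sum.elim p q s))).symm.trans Sum.exists)

theorem continuous_interleave (p : ℕ → Y) : Continuous (interleave p) := by
  refine continuous_pi fun k => ?_
  unfold interleave
  cases Equiv.natSumNatEquivNat.symm k <;> simp only [Sum.elim_inl, Sum.elim_inr] <;> fun_prop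

namespace MemReduces

theorem of_isClopen (ha : E a a) (hb : E b b) {D : Set X} (hD : IsClopen D) :
    MemReduces E a b D := by
  refine ⟨fun x => cond (D.boolIndicator x) a b,
    (continuous_of_discreteTopology (f := fun t => cond t a b)).comp
      ((continuous_boolIndicator_iff_isClopen D).2 hD), fun x => ⟨fun hx => ?_, fun hx => ?_⟩⟩
  · simpa only [Function.comp_apply, (mem_iff_boolIndicator D x).1 hx, cond_true] using ha
  · simpa only [Function.comp_apply, (notMem_iff_boolIndicator D x).1 hx, cond_false] using hb

theorem contReduces (hE : Equivalence E) (hab : ¬ E a b) {D : Set X} (h : MemReduces E a b D) :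
    ContReduces (fun x y => x ∈ D ↔ y ∈ D) E := by
  obtain ⟨Γ, hΓ, h⟩ := h
  exact ⟨Γ, hΓ, fun x y => (rel_iff_of_two_classes hE hab (h x) (h y)).symm⟩

theorem iUnion_iInter_of_antitone (hE : Equivalence E) {D : ℕ → ℕ → Set X}
    (hanti : ∀ i, Antitone (D i)) (hD : ∀ i j, MemReduces E a b (D i j)) :
    MemReduces (FSJump (RelPow E)) (fullSeq a b) (switchSeq a b) (⋃ i, ⋂ j, D i j) := by
  choose Γ hΓ h using hD
  have hpow := RelPow.equivalence hE
  let row (x : X) (i j : ℕ) : Y := Γ i j x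
  have row_const {x : X} {i : ℕ} (hx : x ∈ ⋂ j, D i j) : RelPow E (row x i) fun _ => a :=
    fun j => (h i j x).1 (mem_iInter.1 hx j)
  have row_switch {x : X} {i : ℕ} (hx : x ∉ ⋂ j, D i j) :
      ∃ k, RelPow E (row x i) (switchSeq a b k) := by
    obtain ⟨k, hk⟩ := exists_forall_mem_iff_lt (hanti i) hx
    refine ⟨k, fun j => ?_⟩
    unfold switchSeq
    split_ifs with hj
    · exact (h i j x).1 ((hk j).2 hj)
    · exact (h i j x).2 (mt (hk j).1 hj)
  refine ⟨fun x => interleave (switchSeq a b) (row x),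
    (continuous_interleave _).comp (by fun_prop), fun x => ⟨fun hx => ?_, fun hx => ?_⟩⟩
  · obtain ⟨i, hi⟩ := mem_iUnion.1 hx
    refine fsJump_interleave_iff.2 ⟨⟨fun k => ⟨k + 1, hpow.refl _⟩, fun i' => ?_⟩, ?_⟩
    · by_cases hi' : x ∈ ⋂ j, D i' j
      · exact ⟨0, row_const hi'⟩
      · exact (row_switch hi').elim fun k hk => ⟨k + 1, hk⟩
    · rintro (_ | k)
      · exact .inr ⟨i, hpow.symm (row_const hi)⟩
      · exact .inl ⟨k, hpow.refl _⟩
  · have hx (i : ℕ) : x ∉ ⋂ j, D i j := fun hi => hx (mem_iUnion.2 ⟨i, hi⟩)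
    exact fsJump_interleave_iff.2 ⟨⟨fun k => ⟨k, hpow.refl _⟩, fun i => row_switch (hx i)⟩,
      fun l => .inl ⟨l, hpow.refl _⟩⟩

theorem iUnion_iInter (hE : Equivalence E) {𝒟 : Set (Set X)} (h𝒟 : InfClosed 𝒟)
    (hred : ∀ D ∈ 𝒟, MemReduces E a b D) {D : ℕ → ℕ → Set X} (hD : ∀ i j, D i j ∈ 𝒟) :
    MemReduces (FSJump (RelPow E)) (fullSeq a b) (switchSeq a b) (⋃ i, ⋂ j, D i j) := by
  simp only [← iInter_dissipate (s := D _)]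
  exact iUnion_iInter_of_antitone hE (fun i => antitone_dissipate)
    fun i j => hred _ (dissipate_mem_of_infClosed h𝒟 (hD i) j)

end MemReduces

theorem memReduces_fullRel_of_mem_sigmaLevel [SecondCountableTopology X]
    (hX : IsTopologicalBasis {s : Set X | IsClopen s}) (n : ℕ) {C : Set X}
    (hC : C ∈ SigmaLevel X (2 * n + 1)) :
    MemReduces (FullRel (2 * n + 1)) (canF (2 * n + 1)) (canI (2 * n + 1)) C := by
  induction n generalizing C with
  | zero =>
    obtain ⟨D, hD, rfl⟩ := exists_isClopen_iUnion_iInter_of_mem_sigmaLevel_one hX hC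
    rw [fullRel_one, canF_one, canI_one]
    exact .iUnion_iInter eq_equivalence (𝒟 := {s | IsClopen s}) (fun _ hU _ hV => hU.inter hV)
      (fun _ => .of_isClopen rfl rfl) hD
  | succ n ih =>
    obtain ⟨D, hD, rfl⟩ := exists_iUnion_iInter_of_mem_sigmaLevel_add_two hC
    rw [Nat.mul_succ, Nat.add_right_comm, fullRel_add_two, canF_add_two, canI_add_two]
    exact .iUnion_iInter (FullRel.equivalence _) (infClosed_sigmaLevel _) (fun _ => ih) hD

end Membership

section TowerReductions

theorem absorbsTags_eqBairePlus : ∀ n, AbsorbsTags (eqBairePlus n)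
  | 0 => absorbsTags_eq_baire.fsJump
  | n + 1 => (absorbsTags_eqBairePlus n).fsJump

theorem contReduces_relPow_eqBairePlus :
    ∀ n, ContReduces (RelPow (eqBairePlus n)) (eqBairePlus n)
  | 0 => absorbsTags_eq_baire.relPow_fsJump
  | n + 1 => (absorbsTags_eqBairePlus n).relPow_fsJump

theorem contReduces_fullRel_eqBairePlus (n : ℕ) :
    ContReduces (FullRel (2 * n + 1)) (eqBairePlus n) := by
  induction n with
  | zero => exact ⟨id, continuous_id, fun _ _ => Iff.rfl⟩
  | succ n ih => exact (ih.relPow.trans (contReduces_relPow_eqBairePlus n)).fsJump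

end TowerReductions

section Structures

variable {ι : Type} {ar : ι → ℕ} {A B S S' : Md ι ar} {C : Set (Md ι ar)}

theorem Iso.refl (A : Md ι ar) : Iso A A := ⟨id, Function.bijective_id, fun _ _ => rfl⟩

theorem Iso.symm (h : Iso A B) : Iso B A := by
  obtain ⟨σ, hσ, h⟩ := h
  obtain ⟨τ, hτσ, hστ⟩ := Function.bijective_iff_has_inverse.1 hσ
  refine ⟨τ, Function.bijective_iff_has_inverse.2 ⟨σ, hστ, hτσ⟩, fun i v => ?_⟩
  rw [h, ← Function.comp_assoc, hστ.comp_eq_id, Function.id_comp]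

theorem Iso.trans {A B C : Md ι ar} (hAB : Iso A B) (hBC : Iso B C) : Iso A C := by
  obtain ⟨σ, hσ, hAB⟩ := hAB
  obtain ⟨τ, hτ, hBC⟩ := hBC
  exact ⟨τ ∘ σ, hτ.comp hσ, fun i v => (hAB i v).trans (hBC i (σ ∘ v))⟩

theorem Iso.equivalence : Equivalence (Iso (ar := ar)) := ⟨Iso.refl, Iso.symm, Iso.trans⟩

theorem iso_iff_mem_iff_mem (hA : ∀ S, Iso S A → S ∈ C) (hB : ∀ S, Iso S B → S ∉ C)
    (hS : S ∈ LearnDom {A, B}) (hS' : S' ∈ LearnDom {A, B}) :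
    Iso S S' ↔ (S ∈ C ↔ S' ∈ C) := by
  have not_iso : ¬ Iso A B := fun h => hB A h (hA A (Iso.refl A))
  have iso_of_mem {T : Md ι ar} (hT : T ∈ LearnDom {A, B}) :
      (T ∈ C → Iso T A) ∧ (T ∉ C → Iso T B) := by
    obtain ⟨_, rfl | rfl, hT⟩ := hT
    · exact ⟨fun _ => hT, fun h => absurd (hA T hT) h⟩
    · exact ⟨fun h => absurd h (hB T hT), fun _ => hT⟩
  exact rel_iff_of_two_classes Iso.equivalence not_iso (iso_of_mem hS) (iso_of_mem hS')

theorem ContReduces.learnable_pair {X : Type*} [TopologicalSpace X] {E : X → X → Prop}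
    (h : ContReduces (fun S S' => S ∈ C ↔ S' ∈ C) E)
    (hA : ∀ S, Iso S A → S ∈ C) (hB : ∀ S, Iso S B → S ∉ C) :
    Learnable E {A, B} := by
  obtain ⟨Γ, hΓ, h⟩ := h
  exact ⟨fun S => Γ S, hΓ.comp continuous_subtype_val,
    fun S S' => (iso_iff_mem_iff_mem hA hB S.2 S'.2).trans (h S S')⟩

instance [Countable ι] : SecondCountableTopology (Md ι ar) :=
  inferInstanceAs (SecondCountableTopology (∀ i : ι, (Fin (ar i) → ℕ) → Bool))

theorem isTopologicalBasis_isClopen_md : IsTopologicalBasis {s : Set (Md ι ar) | IsClopen s} :=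
  isTopologicalBasis_isClopen (X := ∀ i : ι, (Fin (ar i) → ℕ) → Bool)

end Structures

/-- for `n ≥ 1` (here via the shift: `eqBairePlus n = =_{ℕ^ℕ}^{(n+1)+}` and
`SigmaLevel (Md ι ar) (2*n+1) = Σ⁰_{2n+2} = Σ⁰_{2(n+1)}`): if `A ≇ B` and some
`Σ⁰_{2(n+1)}` set `C` contains every copy of `A` and no copy of `B`, then
`{A, B}` is `=_{ℕ^ℕ}^{(n+1)+}`-learnable. -/
theorem stmt_11 {ι : Type} [Countable ι] (ar : ι → ℕ) (n : ℕ)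
    (A B : Md ι ar) (hAB : ¬ Iso A B)
    (C : Set (Md ι ar)) (hC : C ∈ SigmaLevel (Md ι ar) (2 * n + 1))
    (hA : ∀ S, Iso S A → S ∈ C) (hB : ∀ S, Iso S B → S ∉ C) :
    Learnable (eqBairePlus n) ({A, B} : Set (Md ι ar)) := by
  have hred : ContReduces (fun S S' => S ∈ C ↔ S' ∈ C) (FullRel (2 * n + 1)) :=
    (memReduces_fullRel_of_mem_sigmaLevel isTopologicalBasis_isClopen_md n hC).contReduces
      (FullRel.equivalence _) (not_fullRel_canF_canI _)
  exact (hred.trans (contReduces_fullRel_eqBairePlus n)).learnable_pair hA hB
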